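/- Let f : ℝ⁺ → ℂ be smooth with compact support in (0,∞). Then the quantity −2(γ + log(2π)) f(1) − ∫₁^∞ f(u) du/u − ∫₁^∞ (f(u) − f(1))/(u−1) · du/u − ∫₀¹ f(u) du − ∫₀¹ (u f(u) − f(1))/(1−u) du equals (1/2πi) ∫_{σ−i∞}^{σ+i∞} M^s(f) · (−2(γ+log 2π) − 1/s − 1/(1−s) + ∑_{n≥1}(1/n − 1/(n+s)) + ∑_{n≥1}(1/n − 1/(n+1−s))) ds for 0 < σ < 1, where M^s(f) = ∫₀^∞ f(x) x^{s−1} dx and γ is the Euler–Mascheroni constant. -/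

import Mathlib

open Complex MeasureTheory

/-!
Mellin inversion says that the contour integral of `u ^ (-s) • mellin f s` is `f u`. Each term of
the multiplier is a superposition of such powers: `1 / s` and `1 / (1 - s)` are the integrals of
`u ^ (-s) / u` over `(1, ∞)` and of `u ^ (-s)` over `(0, 1)`, and the two series are Gauss's
integrals of `(1 - u ^ w) / (1 - u)` over `(0, 1)` with `w = s` and `w = 1 - s`; for `w = s` the
substitution `u ↦ 1 / u` moves the integral to `(1, ∞)`. Fubini then replaces `u ^ (-s)` by
evaluation at `u`. It applies because `|1 - u ^ w| ≤ |w| |log u|` when `u ≤ 1` and `Re w ≥ 0`, so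
one power of `|w|`, absorbed by the decay of the Mellin transform, pays for the singularity at
`u = 1`.
-/

open Set
open scoped FourierTransform SchwartzMap ContDiff

section VerticalIntegral

variable {E : Type*} [NormedAddCommGroup E] [NormedSpace ℂ E] {σ : ℝ}

/-- `F` is absolutely integrable on the line `Re s = σ`, and the contour integral
`(1/2πi) ∫_{(σ)} F(s) ds` equals `m`. -/
def HasVerticalIntegral (σ : ℝ) (F : ℂ → E) (m : E) : Prop :=
  VerticalIntegrable F σ ∧
    (1 / (2 * (Real.pi : ℂ) * I)) • ∫ t : ℝ, I • F ((σ : ℂ) + t * I) = m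

theorem HasVerticalIntegral.congr {F G : ℂ → E} {m : E} (hF : HasVerticalIntegral σ F m)
    (hFG : ∀ s : ℂ, s.re = σ → G s = F s) : HasVerticalIntegral σ G m := by
  have hline (t : ℝ) : G ((σ : ℂ) + t * I) = F ((σ : ℂ) + t * I) := hFG _ (by simp)
  simpa only [HasVerticalIntegral, VerticalIntegrable, hline] using hF

theorem HasVerticalIntegral.add {F G : ℂ → E} {m n : E} (hF : HasVerticalIntegral σ F m)
    (hG : HasVerticalIntegral σ G n) : HasVerticalIntegral σ (fun s ↦ F s + G s) (m + n) := by
  refine ⟨Integrable.add hF.1 hG.1, ?_⟩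
  simp only [integral_smul, ← hF.2, ← hG.2]
  rw [integral_add hF.1 hG.1, smul_add, smul_add]

theorem HasVerticalIntegral.const_smul {F : ℂ → E} {m : E} (c : ℂ)
    (hF : HasVerticalIntegral σ F m) : HasVerticalIntegral σ (fun s ↦ c • F s) (c • m) := by
  refine ⟨Integrable.smul c hF.1, ?_⟩
  simp_rw [smul_comm I c]
  rw [integral_smul, smul_comm, hF.2]

theorem HasVerticalIntegral.sub {F G : ℂ → E} {m n : E} (hF : HasVerticalIntegral σ F m)
    (hG : HasVerticalIntegral σ G n) : HasVerticalIntegral σ (fun s ↦ F s - G s) (m - n) := by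
  simpa [sub_eq_add_neg] using hF.add (hG.const_smul (-1))

theorem HasVerticalIntegral.setIntegral {S : Set ℝ} (hS : MeasurableSet S) {F : ℝ → ℂ → E}
    {m : ℝ → E} (hF : ∀ u ∈ S, HasVerticalIntegral σ (F u) (m u))
    (hint : Integrable (fun z : ℝ × ℝ ↦ F z.2 ((σ : ℂ) + z.1 * I))
      (volume.prod (volume.restrict S))) :
    HasVerticalIntegral σ (fun s ↦ ∫ u in S, F u s) (∫ u in S, m u) := by
  refine ⟨hint.integral_prod_left, ?_⟩
  rw [integral_smul, integral_integral_swap hint, ← integral_smul, ← integral_smul]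
  refine setIntegral_congr_fun hS fun u hu ↦ ?_
  rw [← (hF u hu).2, integral_smul]

theorem verticalIntegrable_of_id_smul (hσ : σ ≠ 0) {F : ℂ → E}
    (hF : VerticalIntegrable (fun s ↦ s • F s) σ) : VerticalIntegrable F σ := by
  have hne (t : ℝ) : (σ : ℂ) + t * I ≠ 0 := fun h ↦ hσ (by simpa using congrArg re h)
  have hbound (t : ℝ) : ‖((σ : ℂ) + t * I)⁻¹‖ ≤ |σ|⁻¹ := by
    rw [norm_inv]
    exact inv_anti₀ (abs_pos.2 hσ) (by simpa using abs_re_le_norm ((σ : ℂ) + t * I))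
  have hcont : Continuous fun t : ℝ ↦ ((σ : ℂ) + t * I)⁻¹ := by fun_prop (disch := exact hne _)
  refine (hF.bdd_smul |σ|⁻¹ hcont.aestronglyMeasurable (ae_of_all _ hbound)).congr
    (ae_of_all _ fun t ↦ ?_)
  exact inv_smul_smul₀ (hne t) _

end VerticalIntegral

section MellinInversion

variable {E : Type*} [NormedAddCommGroup E] [NormedSpace ℂ E] [CompleteSpace E]
  {f : ℝ → E} {σ : ℝ}

theorem hasVerticalIntegral_cpow_smul_mellin (hconv : MellinConvergent f σ)
    (hM : VerticalIntegrable (mellin f) σ) {u : ℝ} (hu : 0 < u) (hfu : ContinuousAt f u) :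
    HasVerticalIntegral σ (fun s ↦ (u : ℂ) ^ (-s) • mellin f s) (f u) := by
  constructor
  · have hu' : (u : ℂ) ≠ 0 := ofReal_ne_zero.2 hu.ne'
    refine Integrable.bdd_smul hM (u ^ (-σ)) ?_ (ae_of_all _ fun t ↦ ?_)
    · exact (Continuous.const_cpow (by fun_prop) (.inl hu')).aestronglyMeasurable
    · simp [norm_cpow_eq_rpow_re_of_pos hu]
  · rw [integral_smul, smul_smul, ← mellinInv_mellin_eq σ f hu hconv hM hfu, mellinInv,
      ← Complex.coe_smul]
    congr 1
    push_cast
    field_simp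

theorem hasVerticalIntegral_integral_smul_mellin (hf : ContinuousOn f (Ioi 0))
    (hconv : MellinConvergent f σ) (hM : VerticalIntegrable (mellin f) σ) {p : ℂ → ℂ}
    (hp : VerticalIntegrable (fun s ↦ p s • mellin f s) σ) {S : Set ℝ} (hS : MeasurableSet S)
    (hS₀ : S ⊆ Ioi 0) {a b : ℝ → ℂ} (ha : Measurable a) (hb : Measurable b) {g : ℝ → ℝ}
    (hg : IntegrableOn g S)
    (hbound : ∀ u ∈ S, ∀ s : ℂ, s.re = σ → ‖a u + b u * (u : ℂ) ^ (-s)‖ ≤ ‖p s‖ * g u) :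
    HasVerticalIntegral σ (fun s ↦ (∫ u in S, (a u + b u * (u : ℂ) ^ (-s))) • mellin f s)
      (∫ u in S, (a u • f 1 + b u • f u)) := by
  have hinv {u : ℝ} (hu : 0 < u) := hasVerticalIntegral_cpow_smul_mellin hconv hM hu
    (hf.continuousAt (Ioi_mem_nhds hu))
  have hpointwise (u : ℝ) (hu : u ∈ S) : HasVerticalIntegral σ
      (fun s ↦ (a u + b u * (u : ℂ) ^ (-s)) • mellin f s) (a u • f 1 + b u • f u) := by
    simpa [add_smul, mul_smul] using
      ((hinv one_pos).const_smul (a u)).add ((hinv (hS₀ hu)).const_smul (b u))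
  simp_rw [← integral_smul_const]
  refine HasVerticalIntegral.setIntegral hS hpointwise ((hp.norm.mul_prod hg).mono' ?_ ?_)
  · exact (Measurable.aestronglyMeasurable (by fun_prop)).smul hM.aestronglyMeasurable.comp_fst
  · filter_upwards [Measure.quasiMeasurePreserving_snd.ae (ae_restrict_mem hS)] with z hz
    rw [norm_smul, norm_smul, mul_right_comm]
    gcongr
    exact hbound z.2 hz _ (by simp)

end MellinInversion

section Kernels

theorem norm_one_sub_exp_le {z : ℂ} (hz : z.re ≤ 0) : ‖1 - exp z‖ ≤ ‖z‖ := by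
  have hderiv (w : ℂ) (hw : w ∈ {w : ℂ | w.re ≤ 0}) : ‖deriv exp w‖ ≤ 1 := by
    rw [Complex.deriv_exp, norm_exp]
    exact Real.exp_le_one_iff.2 hw
  simpa using Convex.norm_image_sub_le_of_norm_deriv_le
    (fun w _ ↦ Complex.differentiable_exp w) hderiv (convex_halfSpace_re_le 0) hz
    (show (0 : ℂ).re ≤ 0 from le_rfl)

theorem neg_log_le_two_mul_one_sub_mul_rpow {u : ℝ} (hu₀ : 0 < u) (hu₁ : u ≤ 1) :
    -Real.log u ≤ 2 * (1 - u) * u ^ (-(1 / 2) : ℝ) := by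
  have hlog := Real.one_sub_inv_le_log_of_pos (Real.sqrt_pos.2 hu₀)
  rw [Real.log_sqrt hu₀.le] at hlog
  have hsq : u * (√u)⁻¹ = √u := by rw [← div_eq_mul_inv, Real.div_sqrt]
  have hle : √u ≤ 1 := Real.sqrt_le_one.2 hu₁
  rw [Real.rpow_neg hu₀.le, ← Real.sqrt_eq_rpow]
  linarith

theorem norm_one_sub_ofReal {u : ℝ} (hu : u ≤ 1) : ‖1 - (u : ℂ)‖ = 1 - u := by
  rw [← ofReal_one, ← ofReal_sub, Complex.norm_of_nonneg (sub_nonneg.2 hu)]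

theorem norm_one_sub_cpow_div_one_sub_le {w : ℂ} (hw : 0 ≤ w.re) {u : ℝ} (hu : u ∈ Ioo (0 : ℝ) 1) :
    ‖(1 - (u : ℂ) ^ w) / (1 - u)‖ ≤ ‖w‖ * (2 * u ^ (-(1 / 2) : ℝ)) := by
  obtain ⟨hu₀, hu₁⟩ := hu
  have hlog : Real.log u ≤ 0 := Real.log_nonpos hu₀.le hu₁.le
  have hnum : ‖1 - (u : ℂ) ^ w‖ ≤ -Real.log u * ‖w‖ := by
    rw [cpow_def_of_ne_zero (ofReal_ne_zero.2 hu₀.ne'), ← ofReal_log hu₀.le]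
    refine (norm_one_sub_exp_le ?_).trans_eq ?_
    · rw [re_ofReal_mul]
      exact mul_nonpos_of_nonpos_of_nonneg hlog hw
    · rw [norm_mul, norm_real, Real.norm_of_nonpos hlog]
  rw [norm_div, norm_one_sub_ofReal hu₁.le, div_le_iff₀ (sub_pos.2 hu₁)]
  calc ‖1 - (u : ℂ) ^ w‖ ≤ -Real.log u * ‖w‖ := hnum
    _ ≤ 2 * (1 - u) * u ^ (-(1 / 2) : ℝ) * ‖w‖ := by
      gcongr
      exact neg_log_le_two_mul_one_sub_mul_rpow hu₀ hu₁.le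
    _ = ‖w‖ * (2 * u ^ (-(1 / 2) : ℝ)) * (1 - u) := by ring

theorem integrableOn_two_mul_rpow_neg_half :
    IntegrableOn (fun u : ℝ ↦ 2 * u ^ (-(1 / 2) : ℝ)) (Ioo 0 1) :=
  ((intervalIntegral.integrableOn_Ioo_rpow_iff one_pos).2 (by norm_num)).const_mul 2

theorem integrableOn_one_sub_cpow_div_one_sub {w : ℂ} (hw : 0 ≤ w.re) :
    IntegrableOn (fun u : ℝ ↦ (1 - (u : ℂ) ^ w) / (1 - u)) (Ioo 0 1) := by
  refine (integrableOn_two_mul_rpow_neg_half.const_mul ‖w‖).mono'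
    (Measurable.aestronglyMeasurable (by fun_prop)) ?_
  filter_upwards [ae_restrict_mem measurableSet_Ioo] with u hu
    using norm_one_sub_cpow_div_one_sub_le hw hu

theorem integrableOn_Ioo_cpow {w : ℂ} (hw : -1 < w.re) :
    IntegrableOn (fun u : ℝ ↦ (u : ℂ) ^ w) (Ioo 0 1) :=
  (intervalIntegral.intervalIntegrable_cpow' hw).1.mono_set Ioo_subset_Ioc_self

theorem integral_Ioo_cpow {w : ℂ} (hw : -1 < w.re) :
    ∫ u in Ioo (0 : ℝ) 1, (u : ℂ) ^ w = 1 / (w + 1) := by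
  have hw' : w + 1 ≠ 0 := fun h ↦ by
    have := congrArg re h
    simp only [add_re, one_re, zero_re] at this
    linarith
  rw [← integral_Ioc_eq_integral_Ioo, ← intervalIntegral.integral_of_le zero_le_one,
    integral_cpow (.inl hw)]
  simp [zero_cpow hw']

theorem integral_Ioo_pow_mul_one_sub_cpow {w : ℂ} (hw : 0 ≤ w.re) (n : ℕ) :
    ∫ u in Ioo (0 : ℝ) 1, (u : ℂ) ^ n * (1 - (u : ℂ) ^ w) =
      1 / ((n : ℂ) + 1) - 1 / ((n : ℂ) + 1 + w) := by
  have hn : -1 < (n : ℂ).re := neg_one_lt_zero.trans_le (by simp)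
  have hnw : -1 < ((n : ℂ) + w).re := by
    simp only [add_re, natCast_re]
    linarith [n.cast_nonneg (α := ℝ)]
  rw [add_right_comm, ← integral_Ioo_cpow hn, ← integral_Ioo_cpow hnw,
    ← integral_sub (integrableOn_Ioo_cpow hn) (integrableOn_Ioo_cpow hnw)]
  refine setIntegral_congr_fun measurableSet_Ioo fun u hu ↦ ?_
  simp only [cpow_add _ _ (ofReal_ne_zero.2 hu.1.ne'), cpow_natCast]
  ring

/-- Gauss's integral for `ψ(w + 1) + γ`. -/
theorem hasSum_one_div_sub_one_div_add {w : ℂ} (hw : 0 ≤ w.re) :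
    HasSum (fun n : ℕ ↦ 1 / ((n : ℂ) + 1) - 1 / ((n : ℂ) + 1 + w))
      (∫ u in Ioo (0 : ℝ) 1, (1 - (u : ℂ) ^ w) / (1 - u)) := by
  have hgeom {u : ℝ} (hu : u ∈ Ioo (0 : ℝ) 1) (c : ℂ) :
      HasSum (fun n : ℕ ↦ (u : ℂ) ^ n * c) (c / (1 - u)) := by
    rw [div_eq_inv_mul]
    exact (hasSum_geometric_of_norm_lt_one (by simpa [abs_of_pos hu.1] using hu.2)).mul_right c
  have hgeom_norm {u : ℝ} (hu : u ∈ Ioo (0 : ℝ) 1) (c : ℂ) :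
      HasSum (fun n : ℕ ↦ ‖(u : ℂ) ^ n * c‖) ‖c / (1 - u)‖ := by
    have hden : ‖1 - (u : ℂ)‖ = 1 - u := norm_one_sub_ofReal hu.2.le
    simpa [div_eq_inv_mul, hden, abs_of_pos hu.1] using
      (hasSum_geometric_of_lt_one hu.1.le hu.2).mul_right ‖c‖
  simp_rw [← integral_Ioo_pow_mul_one_sub_cpow hw]
  have hmem := ae_restrict_mem (μ := volume) (measurableSet_Ioo (a := (0 : ℝ)) (b := 1))
  have hmeas (n : ℕ) : Measurable fun u : ℝ ↦ (u : ℂ) ^ n * (1 - (u : ℂ) ^ w) := by fun_prop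
  refine hasSum_integral_of_dominated_convergence _ (fun n ↦ (hmeas n).aestronglyMeasurable)
    (fun n ↦ ae_of_all _ fun u ↦ le_rfl) ?_ ?_ ?_
  · filter_upwards [hmem] with u hu using (hgeom_norm hu _).summable
  · refine (integrableOn_one_sub_cpow_div_one_sub hw).norm.congr ?_
    filter_upwards [hmem] with u hu using (hgeom_norm hu _).tsum_eq.symm
  · filter_upwards [hmem] with u hu using hgeom hu _

theorem integral_Ioo_zero_one_eq_integral_Ioi_one {E : Type*} [NormedAddCommGroup E]
    [NormedSpace ℝ E] (g : ℝ → E) :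
    ∫ u in Ioo (0 : ℝ) 1, g u = ∫ u in Ioi (1 : ℝ), (u ^ 2)⁻¹ • g u⁻¹ := by
  have himage : image (·⁻¹) (Ioi (1 : ℝ)) = Ioo 0 1 := by
    rw [image_inv_eq_inv, inv_Ioi₀ one_pos, inv_one]
  have hderiv (u : ℝ) (hu : u ∈ Ioi (1 : ℝ)) :
      HasDerivWithinAt (·⁻¹) (-(u ^ 2)⁻¹) (Ioi 1) u :=
    (hasDerivAt_inv (zero_lt_one.trans hu).ne').hasDerivWithinAt
  rw [← himage, integral_image_eq_integral_abs_deriv_smul measurableSet_Ioi hderiv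
    inv_injective.injOn]
  simp_rw [abs_neg, abs_inv, abs_sq]

theorem integral_Ioi_inv_mul_cpow_neg {s : ℂ} (hs : 0 < s.re) :
    ∫ u in Ioi (1 : ℝ), (u : ℂ)⁻¹ * (u : ℂ) ^ (-s) = 1 / s := by
  have hpow (u : ℝ) (hu : u ∈ Ioi (1 : ℝ)) :
      (u : ℂ)⁻¹ * (u : ℂ) ^ (-s) = (u : ℂ) ^ (-1 - s) := by
    rw [sub_eq_add_neg, cpow_add _ _ (ofReal_ne_zero.2 (zero_lt_one.trans hu).ne'), cpow_neg_one]
  rw [setIntegral_congr_fun measurableSet_Ioi hpow,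
    integral_Ioi_cpow_of_lt (by simpa using hs) one_pos, ofReal_one, one_cpow,
    show -1 - s + 1 = -s by ring, neg_div_neg_eq]

theorem inv_mul_one_sub_cpow_neg_eq (w : ℂ) {u : ℝ} (hu : u ∈ Ioi (1 : ℝ)) :
    ((u : ℂ) * (u - 1))⁻¹ * (1 - (u : ℂ) ^ (-w)) =
      ((u ^ 2)⁻¹ : ℝ) * ((1 - ((u⁻¹ : ℝ) : ℂ) ^ w) / (1 - (u⁻¹ : ℝ))) := by
  have hu₀ : 0 < u := zero_lt_one.trans hu
  have hu' : (u : ℂ) ≠ 0 := ofReal_ne_zero.2 hu₀.ne'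
  have hu₁ : (u : ℂ) - 1 ≠ 0 := sub_ne_zero.2 (ofReal_ne_one.2 (ne_of_gt hu))
  have hcpow : ((u⁻¹ : ℝ) : ℂ) ^ w = (u : ℂ) ^ (-w) := by
    rw [ofReal_inv, inv_cpow _ _ (by simp [arg_ofReal_of_nonneg hu₀.le, Real.pi_pos.ne]), cpow_neg]
  rw [hcpow]
  push_cast
  field_simp

theorem integral_Ioi_inv_mul_one_sub_cpow_neg (w : ℂ) :
    ∫ u in Ioi (1 : ℝ), ((u : ℂ) * (u - 1))⁻¹ * (1 - (u : ℂ) ^ (-w)) =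
      ∫ u in Ioo (0 : ℝ) 1, (1 - (u : ℂ) ^ w) / (1 - u) := by
  rw [integral_Ioo_zero_one_eq_integral_Ioi_one]
  exact setIntegral_congr_fun measurableSet_Ioi fun u hu ↦ inv_mul_one_sub_cpow_neg_eq w hu

theorem norm_inv_mul_one_sub_cpow_neg_le {w : ℂ} (hw : 0 ≤ w.re) {u : ℝ} (hu : u ∈ Ioi (1 : ℝ)) :
    ‖((u : ℂ) * (u - 1))⁻¹ * (1 - (u : ℂ) ^ (-w))‖ ≤ ‖w‖ * (2 * u ^ (-(3 / 2) : ℝ)) := by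
  have hu₀ : 0 < u := zero_lt_one.trans hu
  have hrpow : (u ^ 2)⁻¹ * u⁻¹ ^ (-(1 / 2) : ℝ) = u ^ (-(3 / 2) : ℝ) := by
    rw [Real.inv_rpow hu₀.le, ← Real.rpow_neg hu₀.le, ← Real.rpow_natCast, ← Real.rpow_neg hu₀.le,
      ← Real.rpow_add hu₀]
    norm_num
  rw [inv_mul_one_sub_cpow_neg_eq w hu, norm_mul, norm_real, Real.norm_of_nonneg (by positivity)]
  calc (u ^ 2)⁻¹ * ‖(1 - ((u⁻¹ : ℝ) : ℂ) ^ w) / (1 - (u⁻¹ : ℝ))‖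
      ≤ (u ^ 2)⁻¹ * (‖w‖ * (2 * u⁻¹ ^ (-(1 / 2) : ℝ))) := by
        gcongr
        exact norm_one_sub_cpow_div_one_sub_le hw ⟨inv_pos.2 hu₀, inv_lt_one_of_one_lt₀ hu⟩
    _ = ‖w‖ * (2 * u ^ (-(3 / 2) : ℝ)) := by rw [← hrpow]; ring

end Kernels

section SmoothCompactSupport

variable {E : Type*} [NormedAddCommGroup E] [NormedSpace ℂ E] {f : ℝ → E}

theorem mellinConvergent_of_tsupport_subset_Ioi (hf : Continuous f) (hsupp : HasCompactSupport f)
    (hpos : tsupport f ⊆ Ioi 0) (s : ℂ) : MellinConvergent f s := by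
  have hcont : ContinuousOn (fun u : ℝ ↦ (u : ℂ) ^ (s - 1) • f u) (tsupport f) := fun u hu ↦
    ((continuousAt_ofReal_cpow_const u _ (.inr (hpos hu).ne')).smul
      hf.continuousAt).continuousWithinAt
  refine (hcont.integrableOn_compact hsupp).of_forall_sdiff_eq_zero measurableSet_Ioi fun u hu ↦ ?_
  rw [image_eq_zero_of_notMem_tsupport hu.2, smul_zero]

theorem exists_schwartzMap_mellin_eq (hf : ContDiff ℝ ∞ f) (hsupp : HasCompactSupport f)
    (hpos : tsupport f ⊆ Ioi 0) (σ : ℝ) :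
    ∃ G : 𝓢(ℝ, E), ∀ t : ℝ, mellin f ((σ : ℂ) + t * I) = G (t / (2 * Real.pi)) := by
  let g (x : ℝ) : E := Real.exp (-σ * x) • f (Real.exp (-x))
  have hg : ContDiff ℝ ∞ g :=
    ContDiff.smul (f := fun x ↦ Real.exp (-σ * x)) (by fun_prop) (hf.comp (by fun_prop))
  have hlog : ContinuousOn (fun u ↦ -Real.log u) (tsupport f) :=
    (Real.continuousOn_log.mono fun u hu ↦ (hpos hu).ne').neg
  have hgsupp : HasCompactSupport g := by
    refine .intro (hsupp.isCompact.image_of_continuousOn hlog) fun x hx ↦ ?_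
    have hx' : Real.exp (-x) ∉ tsupport f := fun h ↦ hx ⟨_, h, by simp⟩
    simp only [g, image_eq_zero_of_notMem_tsupport hx', smul_zero]
  refine ⟨𝓕 (hgsupp.toSchwartzMap hg), fun t ↦ ?_⟩
  have hre : ((σ : ℂ) + t * I).re = σ := by simp
  have him : ((σ : ℂ) + t * I).im = t := by simp
  rw [mellin_eq_fourier, SchwartzMap.fourier_coe, hre, him]
  rfl

theorem verticalIntegrable_pow_smul_mellin (hf : ContDiff ℝ ∞ f) (hsupp : HasCompactSupport f)
    (hpos : tsupport f ⊆ Ioi 0) (k : ℕ) (σ : ℝ) :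
    VerticalIntegrable (fun s ↦ s ^ k • mellin f s) σ := by
  obtain ⟨G, hG⟩ := exists_schwartzMap_mellin_eq hf hsupp hpos σ
  let p (y : ℝ) : ℂ := ((σ : ℂ) + ((2 * Real.pi * y : ℝ) : ℂ) * I) ^ k
  have hp : p.HasTemperateGrowth := by
    unfold p
    fun_prop
  have hint := (SchwartzMap.smulLeftCLM E p G).integrable (μ := volume)
  refine (hint.comp_div Real.two_pi_pos.ne').congr (ae_of_all _ fun t ↦ ?_)
  simp only [SchwartzMap.smulLeftCLM_apply_apply hp, hG, p]
  rw [mul_div_cancel₀ _ Real.two_pi_pos.ne']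

end SmoothCompactSupport

section LocalTerms

variable {E : Type*} [NormedAddCommGroup E] [NormedSpace ℂ E] [CompleteSpace E]
  {f : ℝ → E} {σ : ℝ}

theorem hasVerticalIntegral_one_div_smul_mellin (hσ : 0 < σ) (hf : ContinuousOn f (Ioi 0))
    (hconv : MellinConvergent f σ) (hM : VerticalIntegrable (mellin f) σ) :
    HasVerticalIntegral σ (fun s ↦ (1 / s) • mellin f s)
      (∫ u in Ioi (1 : ℝ), (u : ℂ)⁻¹ • f u) := by
  have hg : IntegrableOn (fun u : ℝ ↦ u ^ (-1 - σ)) (Ioi 1) :=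
    integrableOn_Ioi_rpow_of_lt (by linarith) one_pos
  have h := hasVerticalIntegral_integral_smul_mellin hf hconv hM (p := 1) (by simpa using hM)
    measurableSet_Ioi (Ioi_subset_Ioi zero_le_one) (a := 0) (b := fun u ↦ (u : ℂ)⁻¹)
    measurable_const (by fun_prop) hg fun u hu s hs ↦ by
      have hu₀ : (0 : ℝ) < u := zero_lt_one.trans hu
      simp [norm_cpow_eq_rpow_re_of_pos hu₀, hs, abs_of_pos hu₀, Real.rpow_sub hu₀,
        Real.rpow_neg hu₀.le, div_eq_mul_inv]
  simp only [Pi.zero_apply, zero_add, zero_smul] at h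
  refine h.congr fun s hs ↦ ?_
  rw [← integral_Ioi_inv_mul_cpow_neg (hs ▸ hσ)]

theorem hasVerticalIntegral_one_div_one_sub_smul_mellin (hσ : σ < 1)
    (hf : ContinuousOn f (Ioi 0)) (hconv : MellinConvergent f σ)
    (hM : VerticalIntegrable (mellin f) σ) :
    HasVerticalIntegral σ (fun s ↦ (1 / (1 - s)) • mellin f s) (∫ u in Ioo (0 : ℝ) 1, f u) := by
  have hg : IntegrableOn (fun u : ℝ ↦ u ^ (-σ)) (Ioo 0 1) :=
    (intervalIntegral.integrableOn_Ioo_rpow_iff one_pos).2 (by linarith)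
  have h := hasVerticalIntegral_integral_smul_mellin hf hconv hM (p := 1) (by simpa using hM)
    measurableSet_Ioo Ioo_subset_Ioi_self (a := 0) (b := 1)
    measurable_const measurable_const hg fun u hu s hs ↦ by
      simp [norm_cpow_eq_rpow_re_of_pos hu.1, hs]
  simp only [Pi.zero_apply, Pi.one_apply, zero_add, zero_smul, one_mul, one_smul] at h
  refine h.congr fun s hs ↦ ?_
  rw [integral_Ioo_cpow (by simpa [hs] using hσ), neg_add_eq_sub]

theorem hasVerticalIntegral_digammaSeries_smul_mellin (hσ : 0 ≤ σ) (hf : ContinuousOn f (Ioi 0))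
    (hconv : MellinConvergent f σ) (hM : VerticalIntegrable (mellin f) σ)
    (hM₁ : VerticalIntegrable (fun s ↦ s • mellin f s) σ) :
    HasVerticalIntegral σ
      (fun s ↦ (∑' n : ℕ, (1 / ((n : ℂ) + 1) - 1 / ((n : ℂ) + 1 + s))) • mellin f s)
      (-∫ u in Ioi (1 : ℝ), ((u : ℂ) * (u - 1))⁻¹ • (f u - f 1)) := by
  have hg : IntegrableOn (fun u : ℝ ↦ 2 * u ^ (-(3 / 2) : ℝ)) (Ioi 1) :=
    (integrableOn_Ioi_rpow_of_lt (by norm_num) one_pos).const_mul 2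
  have h := hasVerticalIntegral_integral_smul_mellin hf hconv hM hM₁
    measurableSet_Ioi (Ioi_subset_Ioi zero_le_one) (a := fun u ↦ ((u : ℂ) * (u - 1))⁻¹)
    (b := fun u ↦ -((u : ℂ) * (u - 1))⁻¹) (by fun_prop) (by fun_prop) hg fun u hu s hs ↦ by
      rw [neg_mul, ← sub_eq_add_neg, ← mul_one_sub]
      exact norm_inv_mul_one_sub_cpow_neg_le (hs ▸ hσ) hu
  rw [← integral_neg]
  simp only [neg_smul, neg_mul, ← sub_eq_add_neg, ← smul_sub, ← mul_one_sub] at h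
  simp only [← smul_neg, neg_sub]
  refine h.congr fun s hs ↦ ?_
  rw [integral_Ioi_inv_mul_one_sub_cpow_neg,
    (hasSum_one_div_sub_one_div_add (w := s) (hs ▸ hσ)).tsum_eq]

theorem hasVerticalIntegral_digammaSeries_one_sub_smul_mellin (hσ : σ ≤ 1)
    (hf : ContinuousOn f (Ioi 0)) (hconv : MellinConvergent f σ)
    (hM : VerticalIntegrable (mellin f) σ)
    (hM₁ : VerticalIntegrable (fun s ↦ (1 - s) • mellin f s) σ) :
    HasVerticalIntegral σ
      (fun s ↦ (∑' n : ℕ, (1 / ((n : ℂ) + 1) - 1 / ((n : ℂ) + 1 + 1 - s))) • mellin f s)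
      (-∫ u in Ioo (0 : ℝ) 1, (1 - (u : ℂ))⁻¹ • ((u : ℂ) • f u - f 1)) := by
  have hre {s : ℂ} (hs : s.re = σ) : 0 ≤ (1 - s).re := by simpa [hs] using hσ
  have hkernel (s : ℂ) {u : ℝ} (hu : u ∈ Ioo (0 : ℝ) 1) :
      (1 - (u : ℂ))⁻¹ + -((1 - (u : ℂ))⁻¹ * u) * (u : ℂ) ^ (-s) =
        (1 - (u : ℂ) ^ (1 - s)) / (1 - u) := by
    rw [sub_eq_add_neg 1 s, cpow_add _ _ (ofReal_ne_zero.2 hu.1.ne'), cpow_one]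
    ring
  have h := hasVerticalIntegral_integral_smul_mellin hf hconv hM hM₁
    measurableSet_Ioo Ioo_subset_Ioi_self (a := fun u ↦ (1 - (u : ℂ))⁻¹)
    (b := fun u ↦ -((1 - (u : ℂ))⁻¹ * u)) (by fun_prop) (by fun_prop)
    integrableOn_two_mul_rpow_neg_half fun u hu s hs ↦ by
      rw [hkernel s hu]
      exact norm_one_sub_cpow_div_one_sub_le (hre hs) hu
  rw [← integral_neg]
  simp only [neg_smul, mul_smul, ← sub_eq_add_neg, ← smul_sub] at h
  simp only [← smul_neg, neg_sub]
  refine h.congr fun s hs ↦ ?_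
  rw [setIntegral_congr_fun measurableSet_Ioo fun u hu ↦ hkernel s hu,
    ← (hasSum_one_div_sub_one_div_add (hre hs)).tsum_eq]
  simp only [add_sub_assoc]

theorem complex_place_infinitesimal_generator_general (hσ : 0 < σ) (hσ' : σ < 1)
    (hf : ContinuousOn f (Ioi 0)) (hconv : MellinConvergent f σ)
    (hM : VerticalIntegrable (fun s ↦ s • mellin f s) σ) :
    HasVerticalIntegral σ
      (fun s ↦ (-2 * ((Real.eulerMascheroniConstant : ℂ) + (Real.log (2 * Real.pi) : ℂ))
        - 1 / s - 1 / (1 - s)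
        + (∑' n : ℕ, (1 / ((n : ℂ) + 1) - 1 / ((n : ℂ) + 1 + s)))
        + (∑' n : ℕ, (1 / ((n : ℂ) + 1) - 1 / ((n : ℂ) + 1 + 1 - s)))) • mellin f s)
      ((-2 * ((Real.eulerMascheroniConstant : ℂ) + (Real.log (2 * Real.pi) : ℂ))) • f 1
        - (∫ u in Ioi (1 : ℝ), (u : ℂ)⁻¹ • f u)
        - (∫ u in Ioi (1 : ℝ), ((u : ℂ) * (u - 1))⁻¹ • (f u - f 1))
        - (∫ u in Ioo (0 : ℝ) 1, f u)
        - (∫ u in Ioo (0 : ℝ) 1, (1 - (u : ℂ))⁻¹ • ((u : ℂ) • f u - f 1))) := by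
  have hM₀ : VerticalIntegrable (mellin f) σ := verticalIntegrable_of_id_smul hσ.ne' hM
  have hM₁ : VerticalIntegrable (fun s ↦ (1 - s) • mellin f s) σ := by
    simp only [sub_smul, one_smul]
    exact Integrable.sub hM₀ hM
  have hone : HasVerticalIntegral σ (mellin f) (f 1) := by
    simpa using hasVerticalIntegral_cpow_smul_mellin hconv hM₀ one_pos
      (hf.continuousAt (Ioi_mem_nhds one_pos))
  have hsum := ((((hone.const_smul
    (-2 * ((Real.eulerMascheroniConstant : ℂ) + (Real.log (2 * Real.pi) : ℂ)))).sub
      (hasVerticalIntegral_one_div_smul_mellin hσ hf hconv hM₀)).add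
      (hasVerticalIntegral_digammaSeries_smul_mellin hσ.le hf hconv hM₀ hM)).sub
      (hasVerticalIntegral_one_div_one_sub_smul_mellin hσ' hf hconv hM₀)).add
      (hasVerticalIntegral_digammaSeries_one_sub_smul_mellin hσ'.le hf hconv hM₀ hM₁)
  simp only [← sub_eq_add_neg] at hsum
  refine hsum.congr fun s _ ↦ ?_
  module

end LocalTerms

/-- the complex-place local term of the explicit formula: for smooth `f`
compactly supported in `(0,∞)` and `0 < σ < 1`,
`−2(γ + log 2π) f(1) − ∫₁^∞ f(u) du/u − ∫₁^∞ (f(u)−f(1))/(u−1) du/u − ∫₀¹ f(u) du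
 − ∫₀¹ (u f(u) − f(1))/(1−u) du
 = (1/2πi) ∫_{(σ)} M^s(f) (−2(γ+log 2π) − 1/s − 1/(1−s)
     + ∑_{n≥1}(1/n − 1/(n+s)) + ∑_{n≥1}(1/n − 1/(n+1−s))) ds`. -/
theorem complex_place_infinitesimal_generator (f : ℝ → ℂ)
    (hf : ContDiff ℝ (⊤ : ℕ∞) f) (hsupp : HasCompactSupport f) (hpos : tsupport f ⊆ Set.Ioi 0)
    (σ : ℝ) (hσ : 0 < σ) (hσ' : σ < 1) :
    -2 * ((Real.eulerMascheroniConstant : ℂ) + (Real.log (2 * Real.pi) : ℂ)) * f 1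
      - (∫ u in Set.Ioi (1 : ℝ), f u / (u : ℂ))
      - (∫ u in Set.Ioi (1 : ℝ), (f u - f 1) / ((u : ℂ) - 1) / (u : ℂ))
      - (∫ u in Set.Ioo (0 : ℝ) 1, f u)
      - (∫ u in Set.Ioo (0 : ℝ) 1, ((u : ℂ) * f u - f 1) / (1 - (u : ℂ)))
    = (1 / (2 * (Real.pi : ℂ) * I)) * ∫ t : ℝ,
        mellin f ((σ : ℂ) + t * I) *
          (-2 * ((Real.eulerMascheroniConstant : ℂ) + (Real.log (2 * Real.pi) : ℂ))
            - 1 / ((σ : ℂ) + t * I) - 1 / (1 - ((σ : ℂ) + t * I))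
            + (∑' n : ℕ, (1 / ((n : ℂ) + 1) - 1 / ((n : ℂ) + 1 + ((σ : ℂ) + t * I))))
            + (∑' n : ℕ, (1 / ((n : ℂ) + 1) - 1 / ((n : ℂ) + 1 + 1 - ((σ : ℂ) + t * I))))) * I := by
  have h := complex_place_infinitesimal_generator_general hσ hσ' hf.continuous.continuousOn
    (mellinConvergent_of_tsupport_subset_Ioi hf.continuous hsupp hpos σ)
    (by simpa only [pow_one] using verticalIntegrable_pow_smul_mellin hf hsupp hpos 1 σ)
  simpa only [smul_eq_mul, div_eq_inv_mul, mul_inv, mul_comm, mul_left_comm, mul_assoc]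
    using h.2.symm
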